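/- For every relational vocabulary ρ and all k, ℓ, q ∈ ℕ there exist q*, r*, s* ∈ ℕ such that the following holds. Let B be a finite ρ-structure with n := |U(B)| ≥ 2, let D be a probability distribution on U(B)^k, let C* := ⟦φ(x̄; v̄)⟧^B for some first-order formula φ(x̄; ȳ) over ρ of quantifier rank at most q with |x̄| = k, |ȳ| = ℓ and some v̄ ∈ U(B)^ℓ, and let ε, δ ∈ (0,1) and t ∈ ℕ with t ≥ s*·⌈log(n/δ)/ε⌉. Then with probability at least 1 − δ over a training sequence T = ((ū₁, C*(ū₁)),…,(ū_t, C*(ū_t))) where ū₁,…,ū_t are drawn i.i.d. from D, both of the following hold: (i) there exist a syntactically r*-local formula φ*(x̄; ȳ) over ρ of quantifier rank at most q* and v̄* ∈ U(B)^ℓ such that ⟦φ*(x̄; v̄*)⟧^B is consistent with T; and (ii) every hypothesis H = ⟦φ*(x̄; v̄*)⟧^B, with φ*(x̄; ȳ) syntactically r*-local of quantifier rank at most q* and v̄* ∈ U(B)^ℓ, that is consistent with T satisfies Pr_{ū∼D}[H(ū) ≠ C*(ū)] < ε. -/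

import Mathlib

open FirstOrder FirstOrder.Language

universe w

/-- The quantifier rank of a first-order (bounded) formula: the nesting depth of quantifiers. -/
def qRank {L : FirstOrder.Language} : ∀ {α : Type*} {n : ℕ}, L.BoundedFormula α n → ℕ
  | _, _, .falsum => 0
  | _, _, .equal _ _ => 0
  | _, _, .rel _ _ => 0
  | _, _, .imp f g => max (qRank f) (qRank g)
  | _, _, .all f => qRank f + 1

/-- Adjacency in the Gaifman graph of a structure: two distinct elements are adjacent iff
they occur together in some tuple of some relation. -/
def gaifmanAdj (L : FirstOrder.Language) (M : Type w) [L.Structure M] (a b : M) : Prop :=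
  a ≠ b ∧ ∃ (n : ℕ) (R : L.Relations n) (t : Fin n → M),
    Structure.RelMap R t ∧ (∃ i, t i = a) ∧ (∃ j, t j = b)

/-- `distLE L M r a b` means the distance between `a` and `b` in the Gaifman graph of `M`
is at most `r`. -/
def distLE (L : FirstOrder.Language) (M : Type w) [L.Structure M] : ℕ → M → M → Prop
  | 0, a, b => a = b
  | r + 1, a, b => a = b ∨ ∃ c, gaifmanAdj L M a c ∧ distLE L M r c b

theorem distLE_self (L : FirstOrder.Language) (M : Type w) [L.Structure M] (r : ℕ) (a : M) :
    distLE L M r a a := by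
  cases r with
  | zero => rfl
  | succ r => exact Or.inl rfl

/-- The `r`-neighbourhood of a tuple: all elements at Gaifman distance at most `r`
from some component of the tuple. -/
def nbhd (L : FirstOrder.Language) (M : Type w) [L.Structure M] (r : ℕ) {k : ℕ}
    (u : Fin k → M) : Set M :=
  {b | ∃ i, distLE L M r (u i) b}

/-- `IsDistFormula L r d` says that the formula `d`, with two free variables, expresses
that the Gaifman distance between its two arguments is at most `r` (this is the property
of the formula `δ_{≤r}`). -/
def IsDistFormula.{v} (L : FirstOrder.Language) (r : ℕ) (d : L.Formula (Fin 2)) : Prop :=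
  ∀ (M : Type v) [L.Structure M], ∀ a b : M, d.Realize ![a, b] ↔ distLE L M r a b

/-- The radius-`r` relativisation of a formula with free variables `x_0, …, x_{k-1}`,
relative to a formula `d = δ_{≤r}` expressing distance at most `r`: every (universal)
quantifier `∀ y ψ` is replaced by `∀ y (⋁_i δ_{≤r}(x_i, y) → ψ)` (and consequently every
existential quantifier `∃ y ψ` by `∃ y (⋁_i δ_{≤r}(x_i, y) ∧ ψ)`). -/
def relativize {L : FirstOrder.Language} (d : L.Formula (Fin 2)) :
    ∀ {k n : ℕ}, L.BoundedFormula (Fin k) n → L.BoundedFormula (Fin k) n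
  | _, _, .falsum => .falsum
  | _, _, .equal t₁ t₂ => .equal t₁ t₂
  | _, _, .rel R ts => .rel R ts
  | _, _, .imp f g => (relativize d f).imp (relativize d g)
  | k, n, .all f =>
      ((((List.finRange k).map fun i =>
          BoundedFormula.relabel (![Sum.inl i, Sum.inr (Fin.last n)] : Fin 2 → (Fin k) ⊕ (Fin (n + 1))) d).foldr
            (· ⊔ ·) ⊥).imp (relativize d f)).all

/-- A formula is syntactically `r`-local (w.r.t. the distance formula `d = δ_{≤r}`) if it is
the radius-`r` relativisation of some formula. -/
def SynLocal {L : FirstOrder.Language} (d : L.Formula (Fin 2)) {k : ℕ}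
    (φ : L.Formula (Fin k)) : Prop :=
  ∃ ψ : L.Formula (Fin k), φ = relativize d ψ

/-- The local `(q, r)`-type of a tuple `u` in `M`: the set of syntactically `r`-local formulas
(w.r.t. the distance formula `d = δ_{≤r}`) of quantifier rank at most `q` satisfied by `u`. -/
def ltp {L : FirstOrder.Language} (d : L.Formula (Fin 2)) (q : ℕ) (M : Type w) [L.Structure M]
    {k : ℕ} (u : Fin k → M) : Set (L.Formula (Fin k)) :=
  {φ | SynLocal d φ ∧ qRank φ ≤ q ∧ φ.Realize u}

/-- The first-order `q`-type of a tuple `u` in `M`: the set of formulas of quantifier rank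
at most `q` (with free variables among `x_0, …, x_{k-1}`) satisfied by `u`. -/
def ftp {L : FirstOrder.Language} (q : ℕ) (M : Type w) [L.Structure M]
    {k : ℕ} (u : Fin k → M) : Set (L.Formula (Fin k)) :=
  {φ | qRank φ ≤ q ∧ φ.Realize u}

/-- The union of two disjoint structures (realized as a structure on the sum type):
a relation holds of a tuple iff the tuple lies entirely in one part and the relation
holds there. -/
def sumStructure (L : FirstOrder.Language) [L.IsRelational] (M N : Type w)
    [L.Structure M] [L.Structure N] : L.Structure (M ⊕ N) where
  funMap f _ := isEmptyElim f
  RelMap R t :=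
    (∃ s, t = Sum.inl ∘ s ∧ Structure.RelMap R s) ∨
    (∃ s, t = Sum.inr ∘ s ∧ Structure.RelMap R s)

/-- The substructure of `M` induced on a subset `S`. -/
def inducedStructure (L : FirstOrder.Language) [L.IsRelational] {M : Type w} [L.Structure M]
    (S : Set M) : L.Structure S where
  funMap f _ := isEmptyElim f
  RelMap R t := Structure.RelMap R fun i => (t i : M)

/-- A formula `φ(x_1, …, x_k)` is `r`-local if for every structure `M` and every tuple `u`,
`M ⊨ φ(u)` iff the substructure induced on the `r`-neighbourhood of `u` satisfies `φ(u)`. -/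
def RLocal.{v} (L : FirstOrder.Language) [L.IsRelational] (r : ℕ) {k : ℕ}
    (φ : L.Formula (Fin k)) : Prop :=
  ∀ (M : Type v) [L.Structure M] (u : Fin k → M),
    φ.Realize u ↔
      (letI := inducedStructure L (nbhd L M r u)
       Formula.Realize (M := nbhd L M r u) φ
         (fun i => ⟨u i, i, distLE_self L M r (u i)⟩))


section Distance

variable {L : FirstOrder.Language} {M : Type w} [L.Structure M]

theorem gaifmanAdj.symm {a b : M} (h : gaifmanAdj L M a b) : gaifmanAdj L M b a := by
  obtain ⟨hne, n, R, t, hR, ha, hb⟩ := h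
  exact ⟨hne.symm, n, R, t, hR, hb, ha⟩

theorem distLE.succ {r : ℕ} {a b : M} (h : distLE L M r a b) : distLE L M (r + 1) a b := by
  induction r generalizing a with
  | zero => exact Or.inl h
  | succ r ih =>
    rcases h with rfl | ⟨c, hac, hcb⟩
    · exact Or.inl rfl
    · exact Or.inr ⟨c, hac, ih hcb⟩

theorem distLE.mono {r s : ℕ} {a b : M} (h : distLE L M r a b) (hrs : r ≤ s) :
    distLE L M s a b := by
  induction hrs with
  | refl => exact h
  | step _ ih => exact ih.succ

theorem distLE.trans {r s : ℕ} {a b c : M} (h : distLE L M r a b) (h' : distLE L M s b c) :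
    distLE L M (r + s) a c := by
  induction r generalizing a with
  | zero =>
    obtain rfl : a = b := h
    exact h'.mono (by omega)
  | succ r ih =>
    rcases h with rfl | ⟨d, had, hdb⟩
    · exact h'.mono (by omega)
    · rw [Nat.succ_add]
      exact Or.inr ⟨d, had, ih hdb⟩

theorem gaifmanAdj.distLE_one {a b : M} (h : gaifmanAdj L M a b) : distLE L M 1 a b :=
  Or.inr ⟨b, h, rfl⟩

theorem distLE.symm {r : ℕ} {a b : M} (h : distLE L M r a b) : distLE L M r b a := by
  induction r generalizing a with
  | zero => exact Eq.symm h
  | succ r ih =>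
    rcases h with rfl | ⟨c, hac, hcb⟩
    · exact Or.inl rfl
    · exact (ih hcb).trans hac.symm.distLE_one

theorem distLE_one_of_relMap {n : ℕ} {R : L.Relations n} {t : Fin n → M}
    (h : Structure.RelMap R t) (i j : Fin n) : distLE L M 1 (t i) (t j) := by
  by_cases hij : t i = t j
  · exact Or.inl hij
  · exact gaifmanAdj.distLE_one ⟨hij, n, R, t, h, ⟨i, rfl⟩, ⟨j, rfl⟩⟩

/-- The set of all elements at Gaifman distance at most `r` from some element of `S`. -/
def setNbhd (L : FirstOrder.Language) {M : Type w} [L.Structure M] (r : ℕ) (S : Set M) : Set M :=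
  {b | ∃ a ∈ S, distLE L M r a b}

theorem mem_setNbhd_of_mem {r : ℕ} {S : Set M} {a : M} (ha : a ∈ S) : a ∈ setNbhd L r S :=
  ⟨a, ha, distLE_self L M r a⟩

theorem mem_setNbhd_of_distLE {r s t : ℕ} {S : Set M} {a b : M} (ha : a ∈ setNbhd L r S)
    (h : distLE L M s a b) (hrs : r + s ≤ t) : b ∈ setNbhd L t S := by
  obtain ⟨c, hc, hca⟩ := ha
  exact ⟨c, hc, (hca.trans h).mono hrs⟩

theorem setNbhd_union (r : ℕ) (S T : Set M) :
    setNbhd L r (S ∪ T) = setNbhd L r S ∪ setNbhd L r T := by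
  ext b
  simp only [setNbhd, Set.mem_union, Set.mem_ofPred_eq]
  grind

theorem setNbhd_subset_setNbhd {r s t : ℕ} {S T : Set M} (hT : T ⊆ setNbhd L r S)
    (h : r + s ≤ t) : setNbhd L s T ⊆ setNbhd L t S := by
  rintro b ⟨a, ha, hab⟩
  exact mem_setNbhd_of_distLE (hT ha) hab h

end Distance

section Game

variable {L : FirstOrder.Language} {M : Type w} [L.Structure M]

/-- A set of pairs is a partial isomorphism if it is the graph of a partial injection which
preserves and reflects all relations. -/
def IsPartialIso (L : FirstOrder.Language) {M : Type w} [L.Structure M] (s : Set (M × M)) : Prop :=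
  (∀ p ∈ s, ∀ p' ∈ s, (p.1 = p'.1 ↔ p.2 = p'.2)) ∧
    ∀ (n : ℕ) (R : L.Relations n) (p : Fin n → M × M), (∀ i, p i ∈ s) →
      (Structure.RelMap R (fun i => (p i).1) ↔ Structure.RelMap R (fun i => (p i).2))

/-- Duplicator wins the `q`-round Ehrenfeucht–Fraïssé game from position `s`, where the moves
are restricted to `X` on the left and to `Y` on the right. -/
def EFWin (L : FirstOrder.Language) {M : Type w} [L.Structure M] :
    ℕ → Set M → Set M → Set (M × M) → Prop
  | 0, _, _, s => IsPartialIso L s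
  | q + 1, X, Y, s => IsPartialIso L s ∧
      (∀ a ∈ X, ∃ b ∈ Y, EFWin L q X Y (insert (a, b) s)) ∧
      ∀ b ∈ Y, ∃ a ∈ X, EFWin L q X Y (insert (a, b) s)

theorem EFWin.isPartialIso {q : ℕ} {X Y : Set M} {s : Set (M × M)} (h : EFWin L q X Y s) :
    IsPartialIso L s := by
  cases q with
  | zero => exact h
  | succ q => exact h.1

theorem IsPartialIso.subset {s t : Set (M × M)} (h : IsPartialIso L s) (hts : t ⊆ s) :
    IsPartialIso L t :=
  ⟨fun p hp p' hp' => h.1 p (hts hp) p' (hts hp'), fun n R p hp => h.2 n R p fun i => hts (hp i)⟩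

theorem EFWin.subset {q : ℕ} {X Y : Set M} {s t : Set (M × M)} (h : EFWin L q X Y s)
    (hts : t ⊆ s) : EFWin L q X Y t := by
  induction q generalizing s t with
  | zero => exact IsPartialIso.subset h hts
  | succ q ih =>
    refine ⟨h.1.subset hts, fun a ha => ?_, fun b hb => ?_⟩
    · obtain ⟨b, hb, hab⟩ := h.2.1 a ha
      exact ⟨b, hb, ih hab (Set.insert_subset_insert hts)⟩
    · obtain ⟨a, ha, hab⟩ := h.2.2 b hb
      exact ⟨a, ha, ih hab (Set.insert_subset_insert hts)⟩

theorem EFWin.pred {q : ℕ} {X Y : Set M} {s : Set (M × M)} (h : EFWin L (q + 1) X Y s) :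
    EFWin L q X Y s := by
  induction q generalizing s with
  | zero => exact h.1
  | succ q ih =>
    refine ⟨h.1, fun a ha => ?_, fun b hb => ?_⟩
    · obtain ⟨b, hb, hab⟩ := h.2.1 a ha
      exact ⟨b, hb, ih hab⟩
    · obtain ⟨a, ha, hab⟩ := h.2.2 b hb
      exact ⟨a, ha, ih hab⟩

theorem EFWin.mono {q q' : ℕ} {X Y : Set M} {s : Set (M × M)} (h : EFWin L q X Y s)
    (hq : q' ≤ q) : EFWin L q' X Y s := by
  induction hq with
  | refl => exact h
  | step _ ih => exact ih h.pred

theorem swap_preimage_insert (a b : M) (s : Set (M × M)) :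
    Prod.swap ⁻¹' (insert (a, b) s) = insert (b, a) (Prod.swap ⁻¹' s) := by
  ext ⟨x, y⟩
  simp [and_comm]

theorem IsPartialIso.symm {s : Set (M × M)} (h : IsPartialIso L s) :
    IsPartialIso L (Prod.swap ⁻¹' s) :=
  ⟨fun p hp p' hp' => (h.1 p.swap hp p'.swap hp').symm,
    fun n R p hp => (h.2 n R (fun i => (p i).swap) hp).symm⟩

theorem EFWin.symm {q : ℕ} {X Y : Set M} {s : Set (M × M)} (h : EFWin L q X Y s) :
    EFWin L q Y X (Prod.swap ⁻¹' s) := by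
  induction q generalizing s with
  | zero => exact IsPartialIso.symm h
  | succ q ih =>
    refine ⟨h.1.symm, fun b hb => ?_, fun a ha => ?_⟩
    · obtain ⟨a, ha, hab⟩ := h.2.2 b hb
      exact ⟨a, ha, swap_preimage_insert a b s ▸ ih hab⟩
    · obtain ⟨b, hb, hab⟩ := h.2.1 a ha
      exact ⟨b, hb, swap_preimage_insert a b s ▸ ih hab⟩

theorem efWin_symm_iff {q : ℕ} {X Y : Set M} {s : Set (M × M)} :
    EFWin L q Y X (Prod.swap ⁻¹' s) ↔ EFWin L q X Y s :=
  ⟨fun h => h.symm, fun h => h.symm⟩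

theorem IsPartialIso.of_subset_diagonal {s : Set (M × M)} (h : ∀ p ∈ s, p.1 = p.2) :
    IsPartialIso L s := by
  refine ⟨fun p hp p' hp' => by rw [h p hp, h p' hp'], fun n R p hp => ?_⟩
  rw [show (fun i => (p i).1) = fun i => (p i).2 from funext fun i => h _ (hp i)]

theorem EFWin.of_subset_diagonal {q : ℕ} {X : Set M} {s : Set (M × M)}
    (h : ∀ p ∈ s, p.1 = p.2) : EFWin L q X X s := by
  induction q generalizing s with
  | zero => exact IsPartialIso.of_subset_diagonal h
  | succ q ih =>
    have key : ∀ a ∈ X, ∃ b ∈ X, EFWin L q X X (insert (a, b) s) ∧ a = b := fun a ha =>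
      ⟨a, ha, ih (by simpa [Set.forall_mem_insert] using h), rfl⟩
    refine ⟨IsPartialIso.of_subset_diagonal h, fun a ha => ?_, fun a ha => ?_⟩ <;>
    · obtain ⟨b, hb, hw, rfl⟩ := key a ha
      exact ⟨a, hb, hw⟩

/-- The composition of two game positions. -/
def pairComp (s t : Set (M × M)) : Set (M × M) :=
  {p | ∃ b, (p.1, b) ∈ s ∧ (b, p.2) ∈ t}

theorem IsPartialIso.comp {s t : Set (M × M)} (hs : IsPartialIso L s) (ht : IsPartialIso L t) :
    IsPartialIso L (pairComp s t) := by
  constructor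
  · rintro p ⟨b, hb, hb'⟩ p' ⟨c, hc, hc'⟩
    exact (hs.1 _ hb _ hc).trans (ht.1 _ hb' _ hc')
  · intro n R p hp
    choose b hb hb' using hp
    exact (hs.2 n R (fun i => ((p i).1, b i)) hb).trans (ht.2 n R (fun i => (b i, (p i).2)) hb')

theorem insert_pairComp_subset (a b c : M) (s t : Set (M × M)) :
    insert (a, c) (pairComp s t) ⊆ pairComp (insert (a, b) s) (insert (b, c) t) := by
  rintro p (rfl | ⟨d, hd, hd'⟩)
  · exact ⟨b, Or.inl rfl, Or.inl rfl⟩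
  · exact ⟨d, Or.inr hd, Or.inr hd'⟩

theorem EFWin.comp {q : ℕ} {X Y Z : Set M} {s t : Set (M × M)} (hs : EFWin L q X Y s)
    (ht : EFWin L q Y Z t) : EFWin L q X Z (pairComp s t) := by
  induction q generalizing s t with
  | zero => exact IsPartialIso.comp hs ht
  | succ q ih =>
    refine ⟨hs.1.comp ht.1, fun a ha => ?_, fun c hc => ?_⟩
    · obtain ⟨b, hb, hab⟩ := hs.2.1 a ha
      obtain ⟨c, hc, hbc⟩ := ht.2.1 b hb
      exact ⟨c, hc, (ih hab hbc).subset (insert_pairComp_subset a b c s t)⟩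
    · obtain ⟨b, hb, hbc⟩ := ht.2.2 c hc
      obtain ⟨a, ha, hab⟩ := hs.2.2 b hb
      exact ⟨a, ha, (ih hab hbc).subset (insert_pairComp_subset a b c s t)⟩

/-- Spoiler may play a whole tuple at once. -/
theorem EFWin.exists_tuple {n q : ℕ} {X Y : Set M} {s : Set (M × M)}
    (h : EFWin L (n + q) X Y s) (t : Fin n → M) (ht : ∀ i, t i ∈ X) :
    ∃ t' : Fin n → M, (∀ i, t' i ∈ Y) ∧
      EFWin L q X Y (s ∪ Set.range fun i => (t i, t' i)) := by
  induction n generalizing s with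
  | zero =>
    exact ⟨t, fun i => i.elim0, by simpa using h⟩
  | succ n ih =>
    rw [Nat.succ_add] at h
    obtain ⟨b, hb, hab⟩ := h.2.1 (t 0) (ht 0)
    obtain ⟨t', ht', hw⟩ := ih hab (fun i => t i.succ) fun i => ht _
    refine ⟨Fin.cons b t', Fin.cases hb ht', hw.subset ?_⟩
    rintro p (hp | ⟨i, rfl⟩)
    · exact Or.inl (Or.inr hp)
    · cases i using Fin.cases with
      | zero => exact Or.inl (Or.inl rfl)
      | succ i => exact Or.inr ⟨i, rfl⟩

theorem IsPartialIso.union {X X' Y Y' : Set M} {s t : Set (M × M)}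
    (hX : ∀ x ∈ X, ∀ y ∈ Y, ¬ distLE L M 1 x y) (hX' : ∀ x ∈ X', ∀ y ∈ Y', ¬ distLE L M 1 x y)
    (hs : IsPartialIso L s) (ht : IsPartialIso L t) (hsX : s ⊆ X ×ˢ X') (htY : t ⊆ Y ×ˢ Y') :
    IsPartialIso L (s ∪ t) := by
  have hrel : ∀ {X Y : Set M}, (∀ x ∈ X, ∀ y ∈ Y, ¬ distLE L M 1 x y) → ∀ {n : ℕ}
      (R : L.Relations n) (u : Fin n → M), Structure.RelMap R u →
      (∀ i, u i ∉ Y) ∨ (∀ i, u i ∉ X) := by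
    intro X Y hXY n R u hR
    by_contra! hcon
    obtain ⟨⟨i, hi⟩, j, hj⟩ := hcon
    exact hXY _ hj _ hi (distLE_one_of_relMap hR j i)
  constructor
  · rintro p (hp | hp) p' (hp' | hp')
    · exact hs.1 p hp p' hp'
    · exact iff_of_false (fun h => hX _ (hsX hp).1 _ (htY hp').1 (Or.inl h))
        (fun h => hX' _ (hsX hp).2 _ (htY hp').2 (Or.inl h))
    · exact iff_of_false (fun h => hX _ (hsX hp').1 _ (htY hp).1 (Or.inl h.symm))
        (fun h => hX' _ (hsX hp').2 _ (htY hp).2 (Or.inl h.symm))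
    · exact ht.1 p hp p' hp'
  · intro n R p hp
    constructor
    · intro hR
      rcases hrel hX R _ hR with h | h
      · exact (hs.2 n R p fun i => (hp i).resolve_right fun hi => h i (htY hi).1).1 hR
      · exact (ht.2 n R p fun i => (hp i).resolve_left fun hi => h i (hsX hi).1).1 hR
    · intro hR
      rcases hrel hX' R _ hR with h | h
      · exact (hs.2 n R p fun i => (hp i).resolve_right fun hi => h i (htY hi).2).2 hR
      · exact (ht.2 n R p fun i => (hp i).resolve_left fun hi => h i (hsX hi).2).2 hR

/-- A game on a union of far-apart sets can be played componentwise. -/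
theorem EFWin.union {q : ℕ} {X X' Y Y' : Set M} {s t : Set (M × M)}
    (hX : ∀ x ∈ X, ∀ y ∈ Y, ¬ distLE L M 1 x y) (hX' : ∀ x ∈ X', ∀ y ∈ Y', ¬ distLE L M 1 x y)
    (hs : EFWin L q X X' s) (ht : EFWin L q Y Y' t) (hsX : s ⊆ X ×ˢ X') (htY : t ⊆ Y ×ˢ Y') :
    EFWin L q (X ∪ Y) (X' ∪ Y') (s ∪ t) := by
  have hiso := IsPartialIso.union hX hX' hs.isPartialIso ht.isPartialIso hsX htY
  induction q generalizing s t with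
  | zero => exact hiso
  | succ q ih =>
    have left : ∀ a ∈ X, ∀ b ∈ X', EFWin L q X X' (insert (a, b) s) →
        EFWin L q (X ∪ Y) (X' ∪ Y') (insert (a, b) (s ∪ t)) := by
      intro a ha b hb h
      have hsX' := Set.insert_subset (show (a, b) ∈ X ×ˢ X' from ⟨ha, hb⟩) hsX
      exact Set.insert_union ▸ ih h ht.pred hsX' htY
        (IsPartialIso.union hX hX' h.isPartialIso ht.isPartialIso hsX' htY)
    have right : ∀ a ∈ Y, ∀ b ∈ Y', EFWin L q Y Y' (insert (a, b) t) →
        EFWin L q (X ∪ Y) (X' ∪ Y') (insert (a, b) (s ∪ t)) := by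
      intro a ha b hb h
      have htY' := Set.insert_subset (show (a, b) ∈ Y ×ˢ Y' from ⟨ha, hb⟩) htY
      exact Set.union_insert ▸ ih hs.pred h hsX htY'
        (IsPartialIso.union hX hX' hs.isPartialIso h.isPartialIso hsX htY')
    refine ⟨hiso, ?_, ?_⟩
    · rintro a (ha | ha)
      · obtain ⟨b, hb, h⟩ := hs.2.1 a ha
        exact ⟨b, Or.inl hb, left a ha b hb h⟩
      · obtain ⟨b, hb, h⟩ := ht.2.1 a ha
        exact ⟨b, Or.inr hb, right a ha b hb h⟩
    · rintro b (hb | hb)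
      · obtain ⟨a, ha, h⟩ := hs.2.2 b hb
        exact ⟨a, Or.inl ha, left a ha b hb h⟩
      · obtain ⟨a, ha, h⟩ := ht.2.2 b hb
        exact ⟨a, Or.inr ha, right a ha b hb h⟩

/-- Short distances are preserved by winning positions, if all relations have arity at most
`A`. -/
theorem EFWin.map_distLE {A : ℕ} (hA : ∀ n, L.Relations n → n ≤ A) {r : ℕ} {X Y : Set M}
    {s : Set (M × M)} {a a' b b' : M} (h : EFWin L (A * r) X Y s) (ha : (a, a') ∈ s)
    (hb : (b, b') ∈ s) (hX : ∀ z, distLE L M r a z → z ∈ X) (hab : distLE L M r a b) :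
    distLE L M r a' b' := by
  induction r generalizing a a' s with
  | zero => exact (h.isPartialIso.1 _ ha _ hb).1 hab
  | succ r ih =>
    rcases hab with rfl | ⟨c, ⟨hac, n, R, t, hR, ⟨i, rfl⟩, j, rfl⟩, hcb⟩
    · exact Or.inl ((h.isPartialIso.1 _ ha _ hb).1 rfl)
    · obtain ⟨t', -, hw⟩ := (h.mono (show n + A * r ≤ A * (r + 1) by
        have := hA n R; rw [Nat.mul_succ]; omega)).exists_tuple t
          fun l => hX _ ((distLE_one_of_relMap hR i l).mono (by omega))
      have hi : a' = t' i := (hw.isPartialIso.1 _ (Or.inl ha) _ (Or.inr ⟨i, rfl⟩)).1 rfl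
      refine Or.inr ⟨t' j, ⟨fun hne => hac ?_, n, R, t', ?_, ⟨i, hi.symm⟩, j, rfl⟩, ?_⟩
      · exact (hw.isPartialIso.1 _ (Or.inl ha) _ (Or.inr ⟨j, rfl⟩)).2 hne
      · exact (hw.isPartialIso.2 n R (fun i => (t i, t' i)) fun i => Or.inr ⟨i, rfl⟩).1 hR
      · exact ih hw (Or.inr ⟨j, rfl⟩) (Or.inl hb)
          (fun z hz => hX z (Or.inr ⟨_, ⟨hac, n, R, t, hR, ⟨i, rfl⟩, j, rfl⟩, hz⟩)) hcb

theorem EFWin.mem_setNbhd {A : ℕ} (hA : ∀ n, L.Relations n → n ≤ A) {r : ℕ} {X Y : Set M}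
    {s t : Set (M × M)} {b b' : M} (h : EFWin L (A * r) X Y s) (hts : t ⊆ s)
    (hX : setNbhd L r (Prod.fst '' t) ⊆ X) (hb : (b, b') ∈ s)
    (hbt : b ∈ setNbhd L r (Prod.fst '' t)) : b' ∈ setNbhd L r (Prod.snd '' t) := by
  obtain ⟨_, ⟨p, hp, rfl⟩, hpb⟩ := hbt
  exact ⟨p.2, ⟨p, hp, rfl⟩, h.map_distLE hA (hts hp) hb (fun z hz => hX ⟨p.1, ⟨p, hp, rfl⟩, hz⟩) hpb⟩

theorem fst_image_swap_preimage (t : Set (M × M)) :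
    Prod.fst '' (Prod.swap ⁻¹' t) = Prod.snd '' t := by
  ext a
  simp

theorem snd_image_swap_preimage (t : Set (M × M)) :
    Prod.snd '' (Prod.swap ⁻¹' t) = Prod.fst '' t := by
  ext a
  simp

theorem EFWin.mem_setNbhd' {A : ℕ} (hA : ∀ n, L.Relations n → n ≤ A) {r : ℕ} {X Y : Set M}
    {s t : Set (M × M)} {b b' : M} (h : EFWin L (A * r) X Y s) (hts : t ⊆ s)
    (hY : setNbhd L r (Prod.snd '' t) ⊆ Y) (hb : (b, b') ∈ s)
    (hbt : b' ∈ setNbhd L r (Prod.snd '' t)) : b ∈ setNbhd L r (Prod.fst '' t) := by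
  rw [← snd_image_swap_preimage]
  rw [← fst_image_swap_preimage] at hY hbt
  exact h.symm.mem_setNbhd hA (t := Prod.swap ⁻¹' t) (fun p hp => hts hp) hY hb hbt

/-- A winning position remains winning if the moves are restricted to smaller neighbourhoods. -/
theorem EFWin.restrict {A : ℕ} (hA : ∀ n, L.Relations n → n ≤ A) {q r : ℕ} {X Y : Set M}
    {s t : Set (M × M)} (h : EFWin L (q + A * r) X Y s) (hts : t ⊆ s)
    (hX : setNbhd L r (Prod.fst '' t) ⊆ X) (hY : setNbhd L r (Prod.snd '' t) ⊆ Y) :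
    EFWin L q (setNbhd L r (Prod.fst '' t)) (setNbhd L r (Prod.snd '' t)) s := by
  induction q generalizing s with
  | zero => exact h.isPartialIso
  | succ q ih =>
    rw [Nat.succ_add] at h
    refine ⟨h.isPartialIso, fun a ha => ?_, fun b hb => ?_⟩
    · obtain ⟨b, hb, hw⟩ := h.2.1 a (hX ha)
      have hts' := hts.trans (Set.subset_insert (a, b) s)
      exact ⟨b, (hw.mono (by omega)).mem_setNbhd hA hts' hX (Or.inl rfl) ha, ih hw hts'⟩
    · obtain ⟨a, ha, hw⟩ := h.2.2 b (hY hb)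
      have hts' := hts.trans (Set.subset_insert (a, b) s)
      exact ⟨a, (hw.mono (by omega)).mem_setNbhd' hA hts' hY (Or.inl rfl) hb, ih hw hts'⟩

end Game

section Locality

variable {L : FirstOrder.Language} {M : Type w} [L.Structure M]

theorem image_insert_fst (a b : M) (s : Set (M × M)) :
    Prod.fst '' (insert (a, b) s) = Prod.fst '' s ∪ {a} := by
  rw [Set.image_insert_eq, Set.insert_eq, Set.union_comm]

theorem image_insert_snd (a b : M) (s : Set (M × M)) :
    Prod.snd '' (insert (a, b) s) = Prod.snd '' s ∪ {b} := by
  rw [Set.image_insert_eq, Set.insert_eq, Set.union_comm]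

/-- A family of elements is `(r, d)`-scattered of type `b` if its members are pairwise at distance
more than `d` and have `r`-neighbourhoods which are indistinguishable in `q` rounds from that
of `b`. -/
def IsScattered (L : FirstOrder.Language) {M : Type w} [L.Structure M] (q r d : ℕ) (b : M) {e : ℕ}
    (c : Fin e → M) : Prop :=
  (∀ i, EFWin L q (setNbhd L r {b}) (setNbhd L r {c i}) {(b, c i)}) ∧
    ∀ i j, i ≠ j → ¬ distLE L M d (c i) (c j)

/-- Scattered families covered by few balls are small. -/
theorem card_le_of_scattered {s : Set (M × M)} {m d e : ℕ} (hs : s.encard ≤ m) (c : Fin e → M)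
    (hc : ∀ i, c i ∈ setNbhd L d (Prod.snd '' s))
    (hsc : ∀ i j, i ≠ j → ¬ distLE L M (d + d) (c i) (c j)) : e ≤ m := by
  choose p hp hpc using hc
  choose p' hp' hpp using hp
  have hinj : Function.Injective p' := by
    intro i j hij
    by_contra hne
    refine hsc i j hne ((hpc i).symm.trans ?_)
    rw [← hpp i, hij, hpp j]
    exact hpc j
  have h1 : (Set.range p').encard = e := by
    rw [← Set.image_univ, hinj.encard_image, Set.encard_univ, ENat.card_eq_coe_fintype_card,
      Fintype.card_fin]
  have h2 : (Set.range p').encard ≤ s.encard :=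
    Set.encard_le_encard (by rintro _ ⟨i, rfl⟩; exact hp' i)
  exact_mod_cast h1 ▸ h2.trans hs

theorem exists_far {A : ℕ} (hA : ∀ n, L.Relations n → n ≤ A) {m q r d Q r' : ℕ} {s : Set (M × M)}
    (hs : s.encard ≤ m) (hQ : m + q + A * (d + d + r) ≤ Q) (hr' : d + d + d + r ≤ r')
    (h : EFWin L Q (setNbhd L r' (Prod.fst '' s)) (setNbhd L r' (Prod.snd '' s)) s) {b : M}
    (hb : b ∉ setNbhd L (d + d + d) (Prod.fst '' s)) :
    ∃ b' ∉ setNbhd L d (Prod.snd '' s),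
      EFWin L q (setNbhd L r {b}) (setNbhd L r {b'}) {(b, b')} := by
  by_contra! hcon
  have hnear : ∀ c, EFWin L q (setNbhd L r {b}) (setNbhd L r {c}) {(b, c)} →
      c ∈ setNbhd L d (Prod.snd '' s) := fun c hc => by_contra fun h' => hcon c h' hc
  let P : ℕ → Prop := fun e => ∃ c : Fin e → M, IsScattered L q r (d + d) b c
  have hP : ∀ e, P e → e ≤ m := fun e ⟨c, hc⟩ =>
    card_le_of_scattered hs c (fun i => hnear _ (hc.1 i)) hc.2
  obtain ⟨e, hem, ⟨c, hc⟩, hmax⟩ : ∃ e ≤ m, P e ∧ ¬ P (e + 1) := by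
    classical
    have hP0 : P 0 := ⟨Fin.elim0, fun i => i.elim0, fun i => i.elim0⟩
    refine ⟨Nat.findGreatest P m, Nat.findGreatest_le m,
      Nat.findGreatest_spec (Nat.zero_le m) hP0, fun h => ?_⟩
    exact absurd (Nat.le_findGreatest (hP _ h) h) (by omega)
  have hmul : A * (d + d + r) = A * d + A * d + A * r := by ring
  obtain ⟨c', hc', hw⟩ := (h.symm.mono (show e + (q + A * (d + d + r)) ≤ Q by omega)).exists_tuple c
    fun i => mem_setNbhd_of_distLE (s := 0) (hnear _ (hc.1 i)) (distLE_self L M 0 _) (by omega)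
  replace hw := hw.symm
  have hst : s ⊆ Prod.swap ⁻¹' (Prod.swap ⁻¹' s ∪ Set.range fun i => (c i, c' i)) :=
    fun p hp => Or.inl hp
  have hci : ∀ i, (c' i, c i) ∈ Prod.swap ⁻¹' (Prod.swap ⁻¹' s ∪ Set.range fun i => (c i, c' i)) :=
    fun i => Or.inr ⟨i, rfl⟩
  have hc'd : ∀ i, c' i ∈ setNbhd L d (Prod.fst '' s) := fun i =>
    (hw.mono (show A * d ≤ _ by omega)).mem_setNbhd' hA hst
      (setNbhd_subset_setNbhd (fun a ha => mem_setNbhd_of_mem (r := 0) ha) (by omega)) (hci i)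
      (hnear _ (hc.1 i))
  refine hmax ⟨Fin.cons b c', fun i => ?_, fun i j hij => ?_⟩
  · cases i using Fin.cases with
    | zero => exact EFWin.of_subset_diagonal (by simp)
    | succ i =>
      have h1 : EFWin L q (setNbhd L r {c i}) (setNbhd L r {c' i}) {(c i, c' i)} := by
        have := (hw.mono (show q + A * r ≤ _ by omega)).restrict hA (t := {(c' i, c i)})
          (by simpa using hci i)
          (by
            simpa using setNbhd_subset_setNbhd (Set.singleton_subset_iff.2 (hc'd i)) (by omega))
          (by
            simpa using setNbhd_subset_setNbhd (Set.singleton_subset_iff.2 (hnear _ (hc.1 i)))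
              (by omega))
        rw [Set.image_singleton, Set.image_singleton] at this
        refine (this.subset (t := {(c' i, c i)}) (by simpa using hci i)).symm.subset (by simp)
      exact ((hc.1 i).comp h1).subset (by simp [pairComp])
  · have hfar : ∀ i, ¬ distLE L M (d + d) (c' i) b := fun i hi =>
      hb (mem_setNbhd_of_distLE (hc'd i) hi (by omega))
    cases i using Fin.cases with
    | zero =>
      cases j using Fin.cases with
      | zero => exact absurd rfl hij
      | succ j => exact fun h' => hfar j h'.symm
    | succ i =>
      cases j using Fin.cases with
      | zero => exact hfar i
      | succ j =>
        intro h'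
        refine hc.2 i j (fun h => hij (congrArg _ h)) ?_
        refine (hw.mono (show A * (d + d) ≤ _ by rw [Nat.mul_add]; omega)).map_distLE hA (hci i) (hci j)
          (fun z hz => mem_setNbhd_of_distLE (hc'd i) hz (by omega)) h'

theorem EFWin.exists_global_move {A : ℕ} (hA : ∀ n, L.Relations n → n ≤ A) {m q r Q r' : ℕ}
    {s : Set (M × M)} (hs : s.encard ≤ m)
    (hQ : m + 1 + q + A * (10 * r + 10) ≤ Q) (hr' : 10 * r + 10 ≤ r')
    (h : EFWin L Q (setNbhd L r' (Prod.fst '' s)) (setNbhd L r' (Prod.snd '' s)) s) (b : M) :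
    ∃ b', EFWin L q (setNbhd L r (Prod.fst '' (insert (b, b') s)))
      (setNbhd L r (Prod.snd '' (insert (b, b') s))) (insert (b, b') s) := by
  have hle : ∀ x, x ≤ 10 * r + 10 → A * x ≤ A * (10 * r + 10) := fun x hx => Nat.mul_le_mul_left A hx
  have hmono : ∀ (S : Set M) x, x ≤ r' → setNbhd L x S ⊆ setNbhd L r' S := fun S x hx =>
    setNbhd_subset_setNbhd (fun a ha => mem_setNbhd_of_mem (r := 0) ha) (by omega)
  set d := 2 * r + 1 with hd
  by_cases hb : b ∈ setNbhd L (d + d + d) (Prod.fst '' s)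
  · have hd1 := hle (d + d + d) (by omega)
    have hd2 := hle r (by omega)
    obtain ⟨b', hb', hw⟩ := (h.mono (show (q + A * (10 * r + 10)) + 1 ≤ Q by omega)).2.1 b
      (hmono _ _ (by omega) hb)
    have hb'd : b' ∈ setNbhd L (d + d + d) (Prod.snd '' s) :=
      (hw.mono (by omega)).mem_setNbhd hA (Set.subset_insert _ _) (hmono _ _ (by omega))
        (Or.inl rfl) hb
    refine ⟨b', (hw.mono (by omega)).restrict hA subset_rfl ?_ ?_⟩
    · rw [image_insert_fst, setNbhd_union]
      exact Set.union_subset (hmono _ _ (by omega))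
        (setNbhd_subset_setNbhd (Set.singleton_subset_iff.2 hb) (by omega))
    · rw [image_insert_snd, setNbhd_union]
      exact Set.union_subset (hmono _ _ (by omega))
        (setNbhd_subset_setNbhd (Set.singleton_subset_iff.2 hb'd) (by omega))
  · have hd1 := hle (d + d + r) (by omega)
    have hd2 := hle r (by omega)
    obtain ⟨b', hb', hw⟩ := exists_far hA hs (q := q) (r := r) (d := d) (by omega) (by omega) h hb
    refine ⟨b', ?_⟩
    have hfar : ∀ (S : Set M) (z : M), z ∉ setNbhd L d S → ∀ x ∈ setNbhd L r S,
        ∀ y ∈ setNbhd L r {z}, ¬ distLE L M 1 x y := by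
      rintro S z hz x hx y ⟨_, rfl, hzy⟩ hxy
      exact hz (mem_setNbhd_of_distLE hx (hxy.trans hzy.symm) (by omega))
    rw [image_insert_fst, image_insert_snd, setNbhd_union, setNbhd_union, Set.insert_eq,
      Set.union_comm {(b, b')}]
    refine EFWin.union (hfar _ _ fun hb'' => hb (mem_setNbhd_of_distLE hb'' (distLE_self L M 0 b)
      (by omega))) (hfar _ _ hb')
      ((h.mono (by omega)).restrict hA subset_rfl (hmono _ _ (by omega)) (hmono _ _ (by omega)))
      hw ?_ ?_
    · exact fun p hp => ⟨mem_setNbhd_of_mem ⟨p, hp, rfl⟩, mem_setNbhd_of_mem ⟨p, hp, rfl⟩⟩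
    · rintro _ rfl
      exact ⟨mem_setNbhd_of_mem rfl, mem_setNbhd_of_mem rfl⟩

/-- **Gaifman locality**, in game form: positions whose neighbourhoods of sufficiently large
radius are sufficiently similar are winning for Duplicator in the game on the whole structure. -/
theorem exists_locality_radius {A : ℕ} (hA : ∀ n, L.Relations n → n ≤ A) (q m : ℕ) :
    ∃ r Q : ℕ, ∀ (M : Type w) [L.Structure M] (s : Set (M × M)), s.encard ≤ m →
      EFWin L Q (setNbhd L r (Prod.fst '' s)) (setNbhd L r (Prod.snd '' s)) s →
      EFWin L q Set.univ Set.univ s := by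
  induction q generalizing m with
  | zero => exact ⟨0, 0, fun M _ s _ h => h⟩
  | succ q ih =>
    obtain ⟨r, Q, hrQ⟩ := ih (m + 1)
    refine ⟨10 * r + 10, m + 1 + Q + A * (10 * r + 10), fun M _ s hs h => ?_⟩
    have hins : ∀ p, (insert p s).encard ≤ (m + 1 : ℕ) := fun p =>
      (Set.encard_insert_le s p).trans (by push_cast; gcongr)
    refine ⟨h.isPartialIso, fun a _ => ?_, fun b _ => ?_⟩
    · obtain ⟨b, hb⟩ := h.exists_global_move hA hs le_rfl le_rfl a
      exact ⟨b, trivial, hrQ M _ (hins _) hb⟩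
    · have h' := h.symm
      rw [← fst_image_swap_preimage, ← snd_image_swap_preimage s] at h'
      obtain ⟨a, ha⟩ := h'.exists_global_move hA (m := m)
        (by rwa [Set.encard_preimage_of_bijective Prod.swap_bijective]) le_rfl le_rfl b
      rw [← swap_preimage_insert, fst_image_swap_preimage, snd_image_swap_preimage,
        efWin_symm_iff] at ha
      exact ⟨a, trivial, hrQ M _ (hins _) ha⟩

end Locality

section Relativization

variable {L : FirstOrder.Language}

theorem qRank_imp {α : Type*} {n : ℕ} (f g : L.BoundedFormula α n) :
    qRank (f.imp g) = max (qRank f) (qRank g) := by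
  simp only [qRank]

theorem qRank_all {α : Type*} {n : ℕ} (f : L.BoundedFormula α (n + 1)) :
    qRank f.all = qRank f + 1 := by
  simp only [qRank]

theorem qRank_castLE {α : Type*} {m n : ℕ} (h : m ≤ n) (φ : L.BoundedFormula α m) :
    qRank (φ.castLE h) = qRank φ := by
  induction φ generalizing n with
  | falsum => simp only [BoundedFormula.castLE, qRank]
  | equal => simp only [BoundedFormula.castLE, qRank]
  | rel => simp only [BoundedFormula.castLE, qRank]
  | imp f g ihf ihg => simp only [BoundedFormula.castLE, qRank, ihf, ihg]
  | all f ih => simp only [BoundedFormula.castLE, qRank, ih]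

theorem qRank_relabel {α β : Type*} {m n : ℕ} (g : α → β ⊕ Fin m) (φ : L.BoundedFormula α n) :
    qRank (φ.relabel g) = qRank φ := by
  unfold BoundedFormula.relabel
  induction φ with
  | falsum => simp only [BoundedFormula.mapTermRel, qRank]
  | equal => simp only [BoundedFormula.mapTermRel, qRank]
  | rel => simp only [BoundedFormula.mapTermRel, qRank]
  | imp f g ihf ihg => simp only [BoundedFormula.mapTermRel, qRank, ihf, ihg]
  | all f ih => simp only [BoundedFormula.mapTermRel, qRank, qRank_castLE, ih]

theorem qRank_foldr_sup_le {α : Type*} {n q : ℕ} (l : List (L.BoundedFormula α n))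
    (h : ∀ φ ∈ l, qRank φ ≤ q) : qRank (l.foldr (· ⊔ ·) ⊥) ≤ q := by
  induction l with
  | nil => exact (qRank.eq_1 ..).trans_le (Nat.zero_le q)
  | cons φ l ih =>
    have h1 := h φ (by simp)
    have h2 := ih fun ψ hψ => h ψ (by simp [hψ])
    rw [List.foldr_cons]
    refine (qRank_imp φ.not _).trans_le (max_le ?_ h2)
    exact (qRank_imp φ .falsum).trans_le (max_le h1 (by simp only [qRank]; omega))

theorem qRank_relativize_le (d : L.Formula (Fin 2)) {k n : ℕ} (φ : L.BoundedFormula (Fin k) n) :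
    qRank (relativize d φ) ≤ qRank φ + qRank d := by
  induction φ with
  | falsum => simp only [relativize, qRank]; omega
  | equal => simp only [relativize, qRank]; omega
  | rel => simp only [relativize, qRank]; omega
  | imp f g ihf ihg =>
    simp only [relativize, qRank]
    omega
  | all f ih =>
    simp only [relativize, qRank]
    rw [Nat.add_right_comm (qRank f)]
    refine Nat.add_le_add_right (max_le ((qRank_foldr_sup_le _ ?_).trans (Nat.le_add_left _ _)) ih) 1
    intro φ hφ
    obtain ⟨i, -, rfl⟩ := List.mem_map.1 hφ
    exact (qRank_relabel _ d).le

/-- The truth value of a formula whose quantifiers range over `X`. -/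
def RealizeIn {M : Type w} [L.Structure M] {α : Type*} (X : Set M) (v : α → M) :
    ∀ {n : ℕ}, L.BoundedFormula α n → (Fin n → M) → Prop
  | _, .falsum, _ => False
  | _, .equal t₁ t₂, xs => t₁.realize (Sum.elim v xs) = t₂.realize (Sum.elim v xs)
  | _, .rel R ts, xs => Structure.RelMap R fun i => (ts i).realize (Sum.elim v xs)
  | _, .imp f g, xs => RealizeIn X v f xs → RealizeIn X v g xs
  | _, .all f, xs => ∀ a ∈ X, RealizeIn X v f (Fin.snoc xs a)

theorem realizeIn_univ {M : Type w} [L.Structure M] {α : Type*} {n : ℕ} {v : α → M}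
    {φ : L.BoundedFormula α n} {xs : Fin n → M} :
    RealizeIn Set.univ v φ xs ↔ φ.Realize v xs := by
  induction φ with
  | falsum => rfl
  | equal => rfl
  | rel => rfl
  | imp f g ihf ihg => exact imp_congr ihf ihg
  | all f ih => exact forall_congr' fun a => (imp_iff_right trivial).trans ih

theorem realize_relativize {r : ℕ} {d : L.Formula (Fin 2)} (hd : IsDistFormula.{w} L r d)
    {M : Type w} [L.Structure M] {k n : ℕ} {u : Fin k → M} {φ : L.BoundedFormula (Fin k) n}
    {xs : Fin n → M} :
    (relativize d φ).Realize u xs ↔ RealizeIn (nbhd L M r u) u φ xs := by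
  induction φ with
  | falsum => simp only [relativize]; rfl
  | equal => simp only [relativize]; rfl
  | rel => simp only [relativize]; rfl
  | imp f g ihf ihg => simp only [relativize]; exact imp_congr ihf ihg
  | all f ih =>
    simp only [relativize]
    refine forall_congr' fun a => imp_congr ?_ ih
    rw [BoundedFormula.realize_foldr_sup]
    simp only [List.mem_map, List.mem_finRange, true_and, exists_exists_eq_and]
    refine exists_congr fun i => ?_
    refine (BoundedFormula.realize_relabel (n := 0)).trans ?_
    rw [← hd M, Formula.Realize]
    refine iff_of_eq (congrArg₂ _ ?_ (Subsingleton.elim _ _))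
    ext j
    fin_cases j <;> simp

variable {M : Type w} [L.Structure M]

theorem EFWin.realizeIn_iff [L.IsRelational] {α : Type*} {q n : ℕ} {X Y : Set M} {s : Set (M × M)}
    (h : EFWin L q X Y s) {φ : L.BoundedFormula α n} (hφ : qRank φ ≤ q) {v v' : α → M}
    {xs xs' : Fin n → M} (hv : ∀ i, (v i, v' i) ∈ s) (hxs : ∀ i, (xs i, xs' i) ∈ s) :
    RealizeIn X v φ xs ↔ RealizeIn Y v' φ xs' := by
  have hterm : ∀ {n : ℕ} {s : Set (M × M)} {xs xs' : Fin n → M} (t : L.Term (α ⊕ Fin n)),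
      (∀ i, (v i, v' i) ∈ s) → (∀ i, (xs i, xs' i) ∈ s) →
      (t.realize (Sum.elim v xs), t.realize (Sum.elim v' xs')) ∈ s := by
    intro n s xs xs' t hv hxs
    cases t with
    | var i => cases i with
      | inl i => exact hv i
      | inr i => exact hxs i
    | func f => exact isEmptyElim f
  induction φ generalizing q s with
  | falsum => rfl
  | equal t₁ t₂ => exact h.isPartialIso.1 _ (hterm t₁ hv hxs) _ (hterm t₂ hv hxs)
  | rel R ts => exact h.isPartialIso.2 _ R _ fun i => hterm (ts i) hv hxs
  | imp f g ihf ihg =>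
    rw [qRank_imp] at hφ
    exact imp_congr (ihf h ((le_max_left _ _).trans hφ) hv hxs)
      (ihg h ((le_max_right _ _).trans hφ) hv hxs)
  | all f ih =>
    rw [qRank_all] at hφ
    cases q with
    | zero => exact absurd hφ (Nat.not_succ_le_zero _)
    | succ q =>
      have step : ∀ a b, EFWin L q X Y (insert (a, b) s) →
          (RealizeIn X v f (Fin.snoc xs a) ↔ RealizeIn Y v' f (Fin.snoc xs' b)) := by
        intro a b hw
        refine ih hw (Nat.le_of_succ_le_succ hφ) (fun i => Or.inr (hv i)) fun i => ?_
        cases i using Fin.lastCases with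
        | last => simp
        | cast i => simpa using Or.inr (hxs i)
      constructor
      · intro hf b hb
        obtain ⟨a, ha, hw⟩ := h.2.2 b hb
        exact (step a b hw).1 (hf a ha)
      · intro hf a ha
        obtain ⟨b, hb, hw⟩ := h.2.1 a ha
        exact (step a b hw).2 (hf b hb)

theorem exists_conjunction {α ι : Type*} {n q : ℕ} (S : Finset ι) (ψ : ι → L.BoundedFormula α n)
    (hψ : ∀ i ∈ S, qRank (ψ i) ≤ q) :
    ∃ θ : L.BoundedFormula α n, qRank θ ≤ q ∧ ∀ (X : Set M) (v : α → M) (xs : Fin n → M),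
      RealizeIn X v θ xs ↔ ∀ i ∈ S, RealizeIn X v (ψ i) xs := by
  classical
  induction S using Finset.induction_on with
  | empty => exact ⟨.imp .falsum .falsum, by simp [qRank], fun X v xs => by simp [RealizeIn]⟩
  | insert i S _ ih =>
    obtain ⟨θ, hθ, h⟩ := ih fun j hj => hψ j (Finset.mem_insert_of_mem hj)
    have := hψ i (Finset.mem_insert_self i S)
    refine ⟨.imp (.imp (ψ i) (.imp θ .falsum)) .falsum, by simp only [qRank]; omega, ?_⟩
    intro X v xs
    simp only [RealizeIn, h, Finset.forall_mem_insert]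
    tauto

/-- A position which is not a partial isomorphism is witnessed by a quantifier-free formula. -/
theorem exists_distinguishing_formula_of_not_isPartialIso {α : Type*} {n : ℕ} {X Y : Set M}
    {v v' : α → M} {xs xs' : Fin n → M}
    (h : ¬ IsPartialIso L (Set.range fun i => (Sum.elim v xs i, Sum.elim v' xs' i))) :
    ∃ φ : L.BoundedFormula α n, qRank φ = 0 ∧ RealizeIn X v φ xs ∧ ¬ RealizeIn Y v' φ xs' := by
  by_contra! hcon
  have hiff : ∀ φ : L.BoundedFormula α n, qRank φ = 0 →
      (RealizeIn X v φ xs ↔ RealizeIn Y v' φ xs') := fun φ hφ =>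
    ⟨hcon φ hφ, fun h' => by_contra fun h'' =>
      hcon (.imp φ .falsum) (by simp [qRank, hφ]) h'' h'⟩
  refine h ⟨?_, ?_⟩
  · rintro _ ⟨i, rfl⟩ _ ⟨j, rfl⟩
    exact hiff (.equal (.var i) (.var j)) (by simp only [qRank])
  · intro m R p hp
    choose i hi using hp
    obtain rfl : p = fun l => (Sum.elim v xs (i l), Sum.elim v' xs' (i l)) :=
      funext fun l => (hi l).symm
    exact hiff (.rel R fun l => .var (i l)) (by simp only [qRank])

/-- In a finite structure, a position which is not winning is witnessed by a formula. -/
theorem exists_distinguishing_formula [Finite M] {α : Type*} {q n : ℕ} {X Y : Set M}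
    {v v' : α → M} {xs xs' : Fin n → M}
    (h : ¬ EFWin L q X Y (Set.range fun i => (Sum.elim v xs i, Sum.elim v' xs' i))) :
    ∃ φ : L.BoundedFormula α n, qRank φ ≤ q ∧ RealizeIn X v φ xs ∧ ¬ RealizeIn Y v' φ xs' := by
  induction q generalizing n with
  | zero =>
    obtain ⟨φ, hφ, h'⟩ := exists_distinguishing_formula_of_not_isPartialIso h
    exact ⟨φ, hφ.le, h'⟩
  | succ q ih =>
    by_cases h0 : IsPartialIso L (Set.range fun i => (Sum.elim v xs i, Sum.elim v' xs' i))
    swap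
    · obtain ⟨φ, hφ, h'⟩ := exists_distinguishing_formula_of_not_isPartialIso h0
      exact ⟨φ, by omega, h'⟩
    have step : ∀ a b, ¬ EFWin L q X Y
        (insert (a, b) (Set.range fun i => (Sum.elim v xs i, Sum.elim v' xs' i))) →
        ∃ φ : L.BoundedFormula α (n + 1), qRank φ ≤ q ∧
          RealizeIn X v φ (Fin.snoc xs a) ∧ ¬ RealizeIn Y v' φ (Fin.snoc xs' b) := by
      intro a b hab
      refine ih fun hw => hab (hw.subset ?_)
      rintro p (rfl | ⟨i, rfl⟩)
      · exact ⟨Sum.inr (Fin.last n), by simp⟩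
      · rcases i with i | i
        · exact ⟨Sum.inl i, rfl⟩
        · exact ⟨Sum.inr i.castSucc, by simp⟩
    cases nonempty_fintype M
    by_cases h1 : ∃ a ∈ X, ∀ b ∈ Y, ¬ EFWin L q X Y
        (insert (a, b) (Set.range fun i => (Sum.elim v xs i, Sum.elim v' xs' i)))
    · obtain ⟨a, ha, hab⟩ := h1
      choose! φ hφ using fun b hb => step a b (hab b hb)
      classical
      obtain ⟨θ, hθ, hθr⟩ := exists_conjunction (M := M) (Finset.univ.filter (· ∈ Y)) φ
        fun b hb => (hφ b (by simpa using hb)).1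
      refine ⟨.imp (.all (.imp θ .falsum)) .falsum, ?_, ?_, ?_⟩
      · simp only [qRank]; omega
      · simp only [RealizeIn, hθr]
        exact fun h' => h' a ha fun b hb => (hφ b (by simpa using hb)).2.1
      · simp only [RealizeIn, hθr]
        exact fun h' => h' fun b hb h'' => (hφ b hb).2.2 (h'' b (by simpa using hb))
    · have h2 : ∃ b ∈ Y, ∀ a ∈ X, ¬ EFWin L q X Y
          (insert (a, b) (Set.range fun i => (Sum.elim v xs i, Sum.elim v' xs' i))) := by
        by_contra! h2
        push Not at h1
        exact h ⟨h0, h1, h2⟩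
      obtain ⟨b, hb, hab⟩ := h2
      choose! φ hφ using fun a ha => step a b (hab a ha)
      classical
      obtain ⟨θ, hθ, hθr⟩ := exists_conjunction (M := M) (Finset.univ.filter (· ∈ X))
        (fun a => (φ a).imp .falsum) (q := q)
        fun a ha => by simpa [qRank] using (hφ a (by simpa using ha)).1
      refine ⟨.all (.imp θ .falsum), ?_, ?_, ?_⟩
      · simp only [qRank]; omega
      · simp only [RealizeIn, hθr]
        exact fun a ha h' => h' a (by simpa using ha) (hφ a ha).2.1
      · simp only [RealizeIn, hθr]
        exact fun h' => h' b hb fun a ha => (hφ a (by simpa using ha)).2.2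

theorem fst_image_range {α : Type*} (u u' : α → M) :
    Prod.fst '' (Set.range fun i => (u i, u' i)) = Set.range u := by
  rw [← Set.range_comp]; rfl

theorem snd_image_range {α : Type*} (u u' : α → M) :
    Prod.snd '' (Set.range fun i => (u i, u' i)) = Set.range u' := by
  rw [← Set.range_comp]; rfl

theorem setNbhd_range (r : ℕ) {k : ℕ} (u : Fin k → M) :
    setNbhd L r (Set.range u) = nbhd L M r u := by
  ext b
  simp [setNbhd, nbhd]

end Relativization

section Definability

theorem exists_arity_bound (L : FirstOrder.Language) [Finite L.Symbols] :
    ∃ A, ∀ n, L.Relations n → n ≤ A := by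
  have : Finite (Σ n, L.Relations n) :=
    Finite.of_injective _ (Sum.inr_injective (α := Σ n, L.Functions n))
  obtain ⟨A, hA⟩ := (Set.finite_range (fun R : Σ n, L.Relations n => R.1)).bddAbove
  exact ⟨A, fun n R => hA ⟨⟨n, R⟩, rfl⟩⟩

/-- On every finite structure, each formula of quantifier rank at most `q` is equivalent to a
syntactically local formula of bounded radius and rank. -/
theorem exists_synLocal_equivalent {L : FirstOrder.Language} [L.IsRelational] [Finite L.Symbols]
    (m q : ℕ) (dlt : ℕ → L.Formula (Fin 2)) (hdlt : ∀ r, IsDistFormula.{w} L r (dlt r)) :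
    ∃ Q r : ℕ, ∀ (M : Type w) [L.Structure M] [Finite M] (φ₀ : L.Formula (Fin m)), qRank φ₀ ≤ q →
      ∃ φ : L.Formula (Fin m), SynLocal (dlt r) φ ∧ qRank φ ≤ Q ∧
        ∀ u : Fin m → M, φ.Realize u ↔ φ₀.Realize u := by
  obtain ⟨A, hA⟩ := exists_arity_bound L
  obtain ⟨r, Q, hrQ⟩ := exists_locality_radius.{w} hA q m
  refine ⟨Q + qRank (dlt r), r, fun M _ _ φ₀ hφ₀ => ?_⟩
  have hsep : ∀ u u' : Fin m → M, φ₀.Realize u → ¬ φ₀.Realize u' → ∃ ψ : L.Formula (Fin m),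
      qRank ψ ≤ Q ∧ RealizeIn (nbhd L M r u) u ψ default ∧
        ¬ RealizeIn (nbhd L M r u') u' ψ default := by
    intro u u' hu hu'
    refine exists_distinguishing_formula fun h => hu' ?_
    have hs : (Set.range fun i => (u i, u' i)).encard ≤ m := by
      rw [← Set.image_univ]
      refine (Set.encard_image_le _ _).trans ?_
      simp
    have h' : EFWin L Q (nbhd L M r u) (nbhd L M r u') (Set.range fun i => (u i, u' i)) :=
      h.subset (by rintro _ ⟨i, rfl⟩; exact ⟨Sum.inl i, rfl⟩)
    rw [← setNbhd_range, ← setNbhd_range, ← fst_image_range u u', ← snd_image_range u u'] at h'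
    exact realizeIn_univ.1 (((hrQ M _ hs h').realizeIn_iff hφ₀ (fun i => ⟨i, rfl⟩)
      fun i => i.elim0).1 (realizeIn_univ.2 hu))
  cases nonempty_fintype M
  classical
  choose! ψ hψ using fun u u' (h : φ₀.Realize u ∧ ¬ φ₀.Realize u') => hsep u u' h.1 h.2
  have hconj : ∀ u : Fin m → M, φ₀.Realize u → ∃ θ : L.Formula (Fin m), qRank θ ≤ Q ∧
      RealizeIn (nbhd L M r u) u θ default ∧
        ∀ u', ¬ φ₀.Realize u' → ¬ RealizeIn (nbhd L M r u') u' θ default := by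
    intro u hu
    obtain ⟨θ, hθ, hθr⟩ := exists_conjunction (M := M) (Finset.univ.filter (¬ φ₀.Realize ·)) (ψ u)
      fun u' hu' => (hψ u u' ⟨hu, by simpa using hu'⟩).1
    refine ⟨θ, hθ, (hθr _ _ _).2 fun u' hu' => (hψ u u' ⟨hu, by simpa using hu'⟩).2.1,
      fun u' hu' h => ?_⟩
    exact (hψ u u' ⟨hu, hu'⟩).2.2 ((hθr _ _ _).1 h u' (by simpa using hu'))
  choose! θ hθ using hconj
  obtain ⟨χ, hχ, hχr⟩ := exists_conjunction (M := M) (Finset.univ.filter (φ₀.Realize ·))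
    (fun u => (θ u).imp .falsum) (q := Q)
    fun u hu => by simpa [qRank] using (hθ u (by simpa using hu)).1
  refine ⟨relativize (dlt r) (χ.imp .falsum), ⟨_, rfl⟩, (qRank_relativize_le _ _).trans
    (Nat.add_le_add_right (by simpa [qRank] using hχ) _), fun u => ?_⟩
  rw [Formula.Realize, realize_relativize (hdlt r)]
  constructor
  · intro h
    by_contra hu
    exact h ((hχr _ _ _).2 fun u' hu' => (hθ u' (by simpa using hu')).2.2 u hu)
  · intro hu h
    exact (hχr _ _ _).1 h u (by simpa using hu) (hθ u hu).2.1

/-- The number of atomic types of `m`-tuples is bounded independently of the structure. -/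
theorem exists_finite_atomic_types.{v, v'} (L : FirstOrder.Language.{v, v'}) [Finite L.Symbols]
    (m : ℕ) :
    ∃ (T : Type v') (_ : Finite T), ∀ (M : Type w) [L.Structure M], ∃ ty : (Fin m → M) → T,
      ∀ u u', ty u = ty u' → IsPartialIso L (Set.range fun i => (u i, u' i)) := by
  have : Finite (Σ n, L.Relations n) :=
    Finite.of_injective _ (Sum.inr_injective (α := Σ n, L.Functions n))
  refine ⟨Set (Fin m × Fin m) × ∀ R : Σ n, L.Relations n, Set (Fin R.1 → Fin m),
    inferInstance, fun M _ => ⟨fun u => ({p | u p.1 = u p.2},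
      fun R => {f | Structure.RelMap R.2 (u ∘ f)}), fun u u' h => ?_⟩⟩
  obtain ⟨h1, h2⟩ := Prod.ext_iff.1 h
  constructor
  · rintro _ ⟨i, rfl⟩ _ ⟨j, rfl⟩
    exact iff_of_eq (congrArg (fun S => (i, j) ∈ S) h1)
  · intro n R p hp
    choose i hi using hp
    obtain rfl : p = fun l => (u (i l), u' (i l)) := funext fun l => (hi l).symm
    exact iff_of_eq (congrArg (fun S => i ∈ S) (congrFun h2 ⟨n, R⟩))

/-- The number of `q`-round game types of `m`-tuples is bounded independently of the structure. -/
theorem exists_finite_types.{v, v'} (L : FirstOrder.Language.{v, v'}) [Finite L.Symbols]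
    (q m : ℕ) :
    ∃ (T : Type v') (_ : Finite T), ∀ (M : Type w) [L.Structure M], ∃ ty : (Fin m → M) → T,
      ∀ u u', ty u = ty u' →
        EFWin L q Set.univ Set.univ (Set.range fun i => (u i, u' i)) := by
  induction q generalizing m with
  | zero => exact exists_finite_atomic_types L m
  | succ q ih =>
    obtain ⟨T₀, _, h₀⟩ := exists_finite_atomic_types.{w} L m
    obtain ⟨T₁, _, h₁⟩ := ih (m + 1)
    refine ⟨T₀ × Set T₁, inferInstance, fun M _ => ?_⟩
    obtain ⟨ty₀, hty₀⟩ := h₀ M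
    obtain ⟨ty₁, hty₁⟩ := h₁ M
    refine ⟨fun u => (ty₀ u, Set.range fun a => ty₁ (Fin.snoc u a)), fun u u' h => ?_⟩
    obtain ⟨h0, h1⟩ := Prod.ext_iff.1 h
    have step : ∀ a b, ty₁ (Fin.snoc u a) = ty₁ (Fin.snoc u' b) →
        EFWin L q Set.univ Set.univ (insert (a, b) (Set.range fun i => (u i, u' i))) := by
      refine fun a b hab => (hty₁ _ _ hab).subset ?_
      rintro _ (rfl | ⟨i, rfl⟩)
      · exact ⟨Fin.last m, by simp⟩
      · exact ⟨i.castSucc, by simp⟩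
    refine ⟨hty₀ u u' h0, fun a _ => ?_, fun b _ => ?_⟩
    · obtain ⟨b, hb⟩ := h1.subset ⟨a, rfl⟩
      exact ⟨b, trivial, step a b hb.symm⟩
    · obtain ⟨a, ha⟩ := h1.superset ⟨b, rfl⟩
      exact ⟨a, trivial, step a b ha⟩

end Definability

section Learning

open MeasureTheory

theorem ofReal_one_sub_le_pi_of_card_mul_pow_le {Ω ι : Type*} [Finite Ω] [MeasurableSpace Ω]
    [MeasurableSingletonClass Ω] [Fintype ι] (D : Measure Ω) [IsProbabilityMeasure D]
    (E : ι → Set Ω) {ε δ : ℝ} (hε : ε < 1) {t : ℕ}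
    (h : Fintype.card ι * (1 - ε) ^ t ≤ δ) :
    ENNReal.ofReal (1 - δ) ≤ Measure.pi (fun _ : Fin t => D)
      {x | ∀ j, (∀ i, x i ∉ E j) → D (E j) < ENNReal.ofReal ε} := by
  classical
  set μ := Measure.pi (fun _ : Fin t => D) with hμ
  set G : Set (Fin t → Ω) := {x | ∀ j, (∀ i, x i ∉ E j) → D (E j) < ENNReal.ofReal ε} with hG
  have hbad : μ Gᶜ ≤ ENNReal.ofReal δ := by
    have hsub : Gᶜ ⊆ ⋃ j, {x : Fin t → Ω | ENNReal.ofReal ε ≤ D (E j) ∧ ∀ i, x i ∉ E j} := by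
      intro x hx
      simp only [hG, Set.mem_compl_iff, Set.mem_ofPred_eq, not_forall, not_lt] at hx
      obtain ⟨j, hj, hj'⟩ := hx
      exact Set.mem_iUnion.2 ⟨j, hj', hj⟩
    have hone : ∀ j, μ {x : Fin t → Ω | ENNReal.ofReal ε ≤ D (E j) ∧ ∀ i, x i ∉ E j} ≤
        ENNReal.ofReal ((1 - ε) ^ t) := by
      intro j
      by_cases hj : ENNReal.ofReal ε ≤ D (E j)
      · have heq : {x : Fin t → Ω | ENNReal.ofReal ε ≤ D (E j) ∧ ∀ i, x i ∉ E j} =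
            Set.univ.pi fun _ => (E j)ᶜ := by
          ext x
          simp [hj]
        rw [heq, hμ, Measure.pi_pi, Finset.prod_const, Finset.card_univ, Fintype.card_fin,
          ENNReal.ofReal_pow (by linarith)]
        gcongr
        rw [prob_compl_eq_one_sub (Set.toFinite _).measurableSet]
        calc 1 - D (E j) ≤ 1 - ENNReal.ofReal ε := tsub_le_tsub_left hj 1
          _ ≤ ENNReal.ofReal (1 - ε) := by
            rw [tsub_le_iff_right, ← ENNReal.ofReal_one]
            refine le_trans ?_ ENNReal.ofReal_add_le
            simp
      · simp [hj]
    calc μ Gᶜ ≤ ∑ j, μ {x : Fin t → Ω | ENNReal.ofReal ε ≤ D (E j) ∧ ∀ i, x i ∉ E j} :=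
          (measure_mono hsub).trans (measure_iUnion_fintype_le _ _)
      _ ≤ ∑ _j : ι, ENNReal.ofReal ((1 - ε) ^ t) := Finset.sum_le_sum fun j _ => hone j
      _ = ENNReal.ofReal (Fintype.card ι * (1 - ε) ^ t) := by
        rw [Finset.sum_const, Finset.card_univ, nsmul_eq_mul,
          ENNReal.ofReal_mul (Nat.cast_nonneg _), ENNReal.ofReal_natCast]
      _ ≤ ENNReal.ofReal δ := ENNReal.ofReal_le_ofReal h
  have hGm : MeasurableSet G := (Set.toFinite _).measurableSet
  have hδ : 0 ≤ δ := le_trans (by have := sub_pos.2 hε; positivity) h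
  rw [ENNReal.ofReal_sub _ hδ, ENNReal.ofReal_one, tsub_le_iff_right,
    ← prob_add_prob_compl (μ := μ) hGm]
  gcongr

theorem card_mul_pow_le_of_sample_size {F n ℓ t : ℕ} (hn : 2 ≤ n) {ε δ : ℝ}
    (hε : ε ∈ Set.Ioo (0 : ℝ) 1) (hδ : δ ∈ Set.Ioo (0 : ℝ) 1)
    (ht : (F + ℓ + 1) * ⌈Real.log (n / δ) / ε⌉₊ ≤ t) :
    ((F * n ^ ℓ : ℕ) : ℝ) * (1 - ε) ^ t ≤ δ := by
  obtain ⟨hε0, hε1⟩ := hε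
  obtain ⟨hδ0, hδ1⟩ := hδ
  have hn2 : (2 : ℝ) ≤ n := by exact_mod_cast hn
  have hn0 : (0 : ℝ) < n := by linarith
  set x : ℝ := δ / n with hx
  have hx0 : 0 < x := by positivity
  have hxδ : x * n = δ := by rw [hx]; field_simp
  have hx2 : x * 2 ≤ 1 := by nlinarith
  have hxx : x ≤ δ := by nlinarith
  have hpow : (1 - ε) ^ t ≤ x ^ (F + ℓ + 1) := by
    have h1 : (1 - ε) ^ t ≤ Real.exp (-(ε * t)) := by
      calc (1 - ε) ^ t ≤ Real.exp (-ε) ^ t := by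
            gcongr
            exact Real.one_sub_le_exp_neg ε
        _ = Real.exp (-(ε * t)) := by rw [← Real.exp_nat_mul]; congr 1; ring
    have h2 : x ^ (F + ℓ + 1) = Real.exp (-((F + ℓ + 1 : ℕ) * Real.log (n / δ))) := by
      have : Real.log (n / δ) = - Real.log x := by rw [hx, ← Real.log_inv, inv_div]
      rw [this, mul_neg, neg_neg, Real.exp_nat_mul, Real.exp_log hx0]
    rw [h2]
    refine h1.trans (Real.exp_le_exp.2 (neg_le_neg ?_))
    have h3 : Real.log (n / δ) / ε ≤ ⌈Real.log (n / δ) / ε⌉₊ := Nat.le_ceil _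
    have h4 : ((F + ℓ + 1 : ℕ) : ℝ) * ⌈Real.log (n / δ) / ε⌉₊ ≤ t := by exact_mod_cast ht
    rw [div_le_iff₀ hε0] at h3
    nlinarith [mul_le_mul_of_nonneg_left h3 (Nat.cast_nonneg (α := ℝ) (F + ℓ + 1)),
      mul_le_mul_of_nonneg_right h4 hε0.le]
  have hF : (F : ℝ) * x ^ F ≤ 1 := by
    calc (F : ℝ) * x ^ F ≤ 2 ^ F * x ^ F := by
          gcongr
          exact_mod_cast Nat.lt_two_pow_self.le
      _ = (x * 2) ^ F := by rw [mul_pow, mul_comm]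
      _ ≤ 1 := pow_le_one₀ (by positivity) hx2
  have hℓ : (n : ℝ) ^ ℓ * x ^ ℓ ≤ 1 := by
    rw [← mul_pow, mul_comm, hxδ]
    exact pow_le_one₀ hδ0.le hδ1.le
  calc ((F * n ^ ℓ : ℕ) : ℝ) * (1 - ε) ^ t ≤ ((F * n ^ ℓ : ℕ) : ℝ) * x ^ (F + ℓ + 1) := by gcongr
    _ = (F * x ^ F) * (n ^ ℓ * x ^ ℓ) * x := by push_cast; ring
    _ ≤ 1 * 1 * δ := by gcongr
    _ = δ := by ring

end Learning

open MeasureTheory in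
/-- Theorem 5.2: PAC learning of first-order definable concepts over a finite
background structure.  With probability at least `1 - δ` over `t ≥ s*⌈log(n/δ)/ε⌉` training
instances drawn i.i.d. from `D` and labelled by the target concept `⟦φ₀(x̄; v₀)⟧^B`
(of quantifier rank at most `q`): (i) some syntactically `r*`-local hypothesis of quantifier
rank at most `q*` is consistent with the sample, and (ii) every such consistent hypothesis has
generalisation error less than `ε`.  Here `dlt r` is the formula `δ_{≤r}`. -/
theorem statement_15 {L : FirstOrder.Language} [L.IsRelational] [Finite L.Symbols]
    (k ℓ q : ℕ) (dlt : ℕ → L.Formula (Fin 2)) (hdlt : ∀ r, IsDistFormula.{w} L r (dlt r)) :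
    ∃ qs rs ss : ℕ, ∀ (B : Type w) [L.Structure B] [Fintype B]
      [MeasurableSpace (Fin k → B)] [MeasurableSingletonClass (Fin k → B)],
      2 ≤ Fintype.card B →
      ∀ D : Measure (Fin k → B), IsProbabilityMeasure D →
      ∀ φ₀ : L.Formula (Fin (k + ℓ)), qRank φ₀ ≤ q → ∀ v₀ : Fin ℓ → B,
      ∀ ε δ : ℝ, ε ∈ Set.Ioo (0 : ℝ) 1 → δ ∈ Set.Ioo (0 : ℝ) 1 →
      ∀ t : ℕ, ss * ⌈Real.log ((Fintype.card B : ℝ) / δ) / ε⌉₊ ≤ t →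
      ENNReal.ofReal (1 - δ) ≤
        Measure.pi (fun _ : Fin t => D)
          {x : Fin t → Fin k → B |
            (∃ φs : L.Formula (Fin (k + ℓ)), SynLocal (dlt rs) φs ∧ qRank φs ≤ qs ∧
              ∃ vs : Fin ℓ → B, ∀ i,
                (φs.Realize (Fin.append (x i) vs) ↔ φ₀.Realize (Fin.append (x i) v₀))) ∧
            ∀ φs : L.Formula (Fin (k + ℓ)), SynLocal (dlt rs) φs → qRank φs ≤ qs →
              ∀ vs : Fin ℓ → B,
                (∀ i, (φs.Realize (Fin.append (x i) vs) ↔ φ₀.Realize (Fin.append (x i) v₀))) →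
                D {u | ¬(φs.Realize (Fin.append u vs) ↔ φ₀.Realize (Fin.append u v₀))} <
                  ENNReal.ofReal ε} := by
  obtain ⟨qs, rs, hloc⟩ := exists_synLocal_equivalent (k + ℓ) q dlt hdlt
  obtain ⟨T, _, hT⟩ := exists_finite_types.{w} L qs (k + ℓ)
  classical
  cases nonempty_fintype T
  refine ⟨qs, rs, Fintype.card (Set T) + ℓ + 1, ?_⟩
  intro B _ _ _ _ hB D _ φ₀ hφ₀ v₀ ε δ hε hδ t ht
  obtain ⟨φ₁, hφ₁, hqφ₁, hequiv⟩ := hloc B φ₀ hφ₀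
  obtain ⟨ty, hty⟩ := hT B
  have hcard := card_mul_pow_le_of_sample_size hB hε hδ ht
  let E : Set T × (Fin ℓ → B) → Set (Fin k → B) := fun p =>
    {u | ¬ (ty (Fin.append u p.2) ∈ p.1 ↔ φ₀.Realize (Fin.append u v₀))}
  refine (ofReal_one_sub_le_pi_of_card_mul_pow_le D E hε.2 (δ := δ) (t := t) ?_).trans
    (measure_mono ?_)
  · simpa using hcard
  · intro x hx
    refine ⟨⟨φ₁, hφ₁, hqφ₁, v₀, fun i => hequiv _⟩, fun φ _ hqφ v hv => ?_⟩
    have hmem : ∀ u : Fin k → B, ty (Fin.append u v) ∈ ty '' {a | φ.Realize a} ↔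
        φ.Realize (Fin.append u v) := by
      refine fun u => ⟨?_, fun h => ⟨_, h, rfl⟩⟩
      rintro ⟨a, ha, hau⟩
      exact realizeIn_univ.1 (((hty _ _ hau).realizeIn_iff hqφ (fun i => ⟨i, rfl⟩)
        fun i => i.elim0).1 (realizeIn_univ.2 ha))
    have hE : E (ty '' {a | φ.Realize a}, v) =
        {u | ¬ (φ.Realize (Fin.append u v) ↔ φ₀.Realize (Fin.append u v₀))} := by
      ext u
      simp only [E, Set.mem_ofPred_eq, hmem]
    rw [← hE]
    refine hx _ fun i => ?_
    rw [hE]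
    exact fun h => h (hv i)
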